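/- For every real number ξ, the limit as u → 0⁻ of (1/(2πi)) ∫_{−∞}^{∞} [η/((1+η²)² (ξ + iu − η))] dη exists and equals −i/(4(ξ−i)²). -/

import Mathlib

open MeasureTheory Complex

lemma aux_inv_tendsto (l : Filter ℝ) (hl : Filter.Tendsto (fun x : ℝ => ‖x‖) l Filter.atTop) (c : ℂ) :
    Filter.Tendsto (fun η : ℝ => ((η : ℂ) + c)⁻¹) l (nhds 0) := by
  apply Filter.tendsto_inv₀_cobounded.comp
  rw [← tendsto_norm_atTop_iff_cobounded]
  apply Filter.tendsto_atTop_mono (f := fun x : ℝ => ‖x‖ + (-‖c‖))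
  · intro x
    have h := norm_sub_norm_le ((x : ℂ)) (-c)
    rw [norm_neg, sub_neg_eq_add, Complex.norm_real] at h
    linarith
  · exact Filter.tendsto_atTop_add_const_right _ _ hl

lemma aux_integral (z : ℂ) (hz : z.im < 0) (hz1 : -1 < z.im) :
    ∫ η : ℝ, (η : ℂ) / ((1 + (η : ℂ) ^ 2) ^ 2 * (z - (η : ℂ)))
      = (Real.pi : ℂ) / (2 * (z - I) ^ 2) := by
  have hzi : z - I ≠ 0 := by
    intro h
    have := congrArg Complex.im h
    simp at this
    linarith
  have hzi' : z + I ≠ 0 := by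
    intro h
    have := congrArg Complex.im h
    simp at this
    linarith
  have h1 : ∀ η : ℝ, (η : ℂ) + I ≠ 0 := by
    intro η h
    have := congrArg Complex.im h
    simp at this
  have h2 : ∀ η : ℝ, (η : ℂ) + -I ≠ 0 := by
    intro η h
    have := congrArg Complex.im h
    simp at this
  have h3 : ∀ η : ℝ, z - (η : ℂ) ≠ 0 := by
    intro η h
    have := congrArg Complex.im h
    simp at this
    linarith
  have hsq : ∀ η : ℝ, (1 + (η : ℂ) ^ 2) = ((η : ℂ) + I) * ((η : ℂ) + -I) := by
    intro η
    linear_combination I_sq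
  have h4 : ∀ η : ℝ, (1 + (η : ℂ) ^ 2) ≠ 0 := by
    intro η
    rw [hsq]
    exact mul_ne_zero (h1 η) (h2 η)
  have hslit : ∀ η : ℝ, 1 + (-z - I) * ((η : ℂ) + I)⁻¹ ∈ slitPlane := by
    intro η
    rw [Complex.mem_slitPlane_iff_not_le_zero]
    intro hle
    obtain ⟨hre, him⟩ := Complex.le_def.1 hle
    set w := 1 + (-z - I) * ((η : ℂ) + I)⁻¹ with hw
    have hw2 : w * ((η : ℂ) + I) = η - z := by
      rw [hw]
      have := h1 η
      field_simp
      ring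
    have := congrArg Complex.im hw2
    simp at this him hre
    rw [him] at this
    simp at this
    linarith
  set E : ℂ := z / ((z - I) ^ 2 * (z + I) ^ 2) with hE
  let F : ℝ → ℂ := fun η =>
    (-1 / (4 * I * (z - I))) * ((η : ℂ) + -I)⁻¹ + (1 / (4 * I * (z + I))) * ((η : ℂ) + I)⁻¹
      + (1 / (2 * (z - I) ^ 2)) * ((Real.arctan η : ℝ) : ℂ)
      - E * Complex.log (1 + (-z - I) * ((η : ℂ) + I)⁻¹)
  have hderiv : ∀ η : ℝ, HasDerivAt F
      ((η : ℂ) / ((1 + (η : ℂ) ^ 2) ^ 2 * (z - (η : ℂ)))) η := by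
    intro η
    have hid : HasDerivAt (fun x : ℝ => (x : ℂ)) 1 η := (hasDerivAt_id η).ofReal_comp
    have ha := (hid.add_const (-I)).fun_inv (h2 η)
    have hb := (hid.add_const I).fun_inv (h1 η)
    have hc := (Real.hasDerivAt_arctan η).ofReal_comp
    have hd := ((hb.const_mul (-z - I)).const_add 1).clog_real (hslit η)
    have hall := (((ha.const_mul (-1 / (4 * I * (z - I)))).add
      (hb.const_mul (1 / (4 * I * (z + I))))).add
      (hc.const_mul (1 / (2 * (z - I) ^ 2)))).sub (hd.const_mul E)
    refine hall.congr_deriv ?_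
    have e1 : 1 + (-z - I) * ((η : ℂ) + I)⁻¹ = -(z - η) / ((η : ℂ) + I) := by
      have := h1 η
      field_simp
      ring
    have e2 : (((1 / (1 + η ^ 2) : ℝ)) : ℂ) = 1 / (((η : ℂ) + I) * ((η : ℂ) + -I)) := by
      rw [← hsq]; push_cast; rfl
    rw [e1, e2, hsq, hE]
    have k1 := h1 η
    have k2 := h2 η
    have k3 := h3 η
    have k4 := I_ne_zero
    clear hall hd hb ha hc hid e1 e2 hslit hsq h1 h2 h3 h4 hz hz1
    clear_value E
    clear hE
    generalize (η : ℂ) = x at *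
    generalize I = j at *
    have k5 : -(z - x) ≠ 0 := neg_ne_zero.2 k3
    field_simp
    ring
  have hint : Integrable (fun η : ℝ => (η : ℂ) / ((1 + (η : ℂ) ^ 2) ^ 2 * (z - (η : ℂ)))) := by
    refine Integrable.mono' (integrable_inv_one_add_sq.mul_const (-z.im)⁻¹) ?_ ?_
    · apply Continuous.aestronglyMeasurable
      apply Continuous.div
      · fun_prop
      · fun_prop
      · intro η
        exact mul_ne_zero (pow_ne_zero _ (h4 η)) (h3 η)
    · refine Filter.Eventually.of_forall fun η => ?_
      have n1 : ‖(1 + (η : ℂ) ^ 2)‖ = 1 + η ^ 2 := by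
        have : (1 + (η : ℂ) ^ 2) = ((1 + η ^ 2 : ℝ) : ℂ) := by push_cast; rfl
        rw [this, Complex.norm_real, Real.norm_of_nonneg (by positivity)]
      have n2 : -z.im ≤ ‖z - (η : ℂ)‖ := by
        have := Complex.abs_im_le_norm (z - (η : ℂ))
        simp at this
        exact (neg_le_abs _).trans this
      have n3 : |η| ≤ 1 + η ^ 2 := by
        rw [abs_le]; constructor <;> nlinarith [sq_nonneg (η - 1), sq_nonneg (η + 1)]
      rw [norm_div, norm_mul, norm_pow, n1, Complex.norm_real, Real.norm_eq_abs]
      have p : 0 < -z.im := by linarith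
      calc |η| / ((1 + η ^ 2) ^ 2 * ‖z - (η : ℂ)‖)
          ≤ (1 + η ^ 2) / ((1 + η ^ 2) ^ 2 * (-z.im)) := by gcongr
        _ = (1 + η ^ 2)⁻¹ * (-z.im)⁻¹ := by
          have : (1 + η ^ 2) ≠ 0 := by positivity
          field_simp
  have hlim : ∀ (l : Filter ℝ) (a : ℝ), Filter.Tendsto (fun x : ℝ => ‖x‖) l Filter.atTop →
      Filter.Tendsto Real.arctan l (nhds a) →
      Filter.Tendsto F l (nhds ((1 / (2 * (z - I) ^ 2)) * (a : ℂ))) := by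
    intro l a hl ha
    have i1 := aux_inv_tendsto l hl (-I)
    have i2 := aux_inv_tendsto l hl I
    have i3 : Filter.Tendsto (fun x => ((Real.arctan x : ℝ) : ℂ)) l (nhds (a : ℂ)) :=
      (Complex.continuous_ofReal.tendsto a).comp ha
    have i4 : Filter.Tendsto (fun η : ℝ => 1 + (-z - I) * ((η : ℂ) + I)⁻¹) l (nhds 1) := by
      simpa using (i2.const_mul (-z - I)).const_add 1
    have i5 := i4.clog (by simp)
    have := (((i1.const_mul (-1 / (4 * I * (z - I)))).add
      (i2.const_mul (1 / (4 * I * (z + I))))).add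
      (i3.const_mul (1 / (2 * (z - I) ^ 2)))).sub (i5.const_mul E)
    simpa [F] using this
  have hbot := hlim Filter.atBot (-(Real.pi / 2)) Filter.tendsto_abs_atBot_atTop
    (Real.tendsto_arctan_atBot.mono_right nhdsWithin_le_nhds)
  have htop := hlim Filter.atTop (Real.pi / 2) Filter.tendsto_abs_atTop_atTop
    (Real.tendsto_arctan_atTop.mono_right nhdsWithin_le_nhds)
  rw [integral_of_hasDerivAt_of_tendsto hderiv hint hbot htop]
  push_cast
  field_simp
  ring

/-- for every real ξ, the limit as u → 0⁻ of
(1/(2πi)) ∫_{-∞}^{∞} η dη / ((1+η²)² (ξ + iu − η)) equals −i/(4(ξ−i)²). -/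
theorem pi_plus_eta_over_one_plus_sq_sq (ξ : ℝ) :
    Filter.Tendsto
      (fun u : ℝ =>
        (1 / (2 * (Real.pi : ℂ) * I)) *
          ∫ η : ℝ, (η : ℂ) / ((1 + (η : ℂ) ^ 2) ^ 2 * ((ξ : ℂ) + I * (u : ℂ) - (η : ℂ))))
      (nhdsWithin 0 (Set.Iio 0))
      (nhds (-I / (4 * ((ξ : ℂ) - I) ^ 2))) := by
  have hξ : (ξ : ℂ) - I ≠ 0 := by
    intro h
    have := congrArg Complex.im h
    simp at this
  have hcont : ContinuousAt (fun u : ℝ => -I / (4 * ((ξ : ℂ) + I * (u : ℂ) - I) ^ 2)) 0 := by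
    apply ContinuousAt.div
    · fun_prop
    · fun_prop
    · simpa using hξ
  have ht : Filter.Tendsto (fun u : ℝ => -I / (4 * ((ξ : ℂ) + I * (u : ℂ) - I) ^ 2))
      (nhdsWithin 0 (Set.Iio 0)) (nhds (-I / (4 * ((ξ : ℂ) - I) ^ 2))) := by
    have := hcont.tendsto.mono_left (nhdsWithin_le_nhds (s := Set.Iio 0))
    simpa using this
  refine ht.congr' ?_
  have hmem : Set.Ioo (-1 : ℝ) 0 ∈ nhdsWithin (0 : ℝ) (Set.Iio 0) :=
    Ioo_mem_nhdsLT (by norm_num)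
  filter_upwards [hmem] with u hu
  rw [aux_integral ((ξ : ℂ) + I * (u : ℂ)) (by simpa using hu.2) (by simpa using hu.1)]
  have hpi : (Real.pi : ℂ) ≠ 0 := by exact_mod_cast Real.pi_ne_zero
  have hne : (ξ : ℂ) + I * (u : ℂ) - I ≠ 0 := by
    intro h
    have := congrArg Complex.im h
    simp at this
    linarith [hu.2]
  have hI := I_ne_zero
  rw [div_mul_div_comm, div_eq_div_iff (by simp [hne]) (by simp [hne, hpi])]
  linear_combination (-4 * (Real.pi : ℂ) * ((ξ : ℂ) + I * (u : ℂ) - I) ^ 2) * I_sq
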